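/- arXiv:1401.0903 — 6 statements merged into one kernel-verified Lean document; each statement's English description precedes it below -/
import Mathlib

section
/- Let Φ be a Hawkes kernel matrix satisfying hypothesis (H). Then for every 1 ≤ i,j ≤ D the series Σ_{k=1}^∞ (Φ^{⋆k})^{ij} converges absolutely in L¹(ℝ), so that Ψ = Σ_{k=1}^∞ Φ^{⋆k} is well defined with nonnegative, causal, integrable entries, and the matrix of L¹ norms of Ψ satisfies the entrywise bound ∫_ℝ Ψ^{ij}(t) dt ≤ ((I − ‖Φ‖)^{−1} ‖Φ‖)^{ij} for all 1 ≤ i,j ≤ D. -/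
open MeasureTheory Matrix Filter Set

/-- Entrywise matrix convolution:
`(A ⋆ B)^{ij}(t) = ∑_{k} ∫ A^{ik}(s) B^{kj}(t - s) ds`. -/
noncomputable def mconv (D : ℕ) (A B : ℝ → Matrix (Fin D) (Fin D) ℝ) :
    ℝ → Matrix (Fin D) (Fin D) ℝ :=
  fun t => Matrix.of fun i j => ∑ k : Fin D, ∫ s : ℝ, A s i k * B (t - s) k j

/-- `mconvIter D Φ k` is the `(k+1)`-fold matrix convolution `Φ^{⋆(k+1)}`. -/
noncomputable def mconvIter (D : ℕ) (Φ : ℝ → Matrix (Fin D) (Fin D) ℝ) :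
    ℕ → ℝ → Matrix (Fin D) (Fin D) ℝ
  | 0 => Φ
  | (k + 1) => mconv D Φ (mconvIter D Φ k)

/-- `Ψ = ∑_{k=1}^∞ Φ^{⋆k}`, defined entrywise as a pointwise sum. -/
noncomputable def hawkesPsi (D : ℕ) (Φ : ℝ → Matrix (Fin D) (Fin D) ℝ) :
    ℝ → Matrix (Fin D) (Fin D) ℝ :=
  fun t => Matrix.of fun i j => ∑' k : ℕ, mconvIter D Φ k t i j

/-- The matrix `‖Φ‖` of `L¹` norms: `‖Φ‖^{ij} = ∫ φ^{ij}(t) dt` (entries nonnegative). -/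
noncomputable def kernelNorm (D : ℕ) (Φ : ℝ → Matrix (Fin D) (Fin D) ℝ) :
    Matrix (Fin D) (Fin D) ℝ :=
  Matrix.of fun i j => ∫ t : ℝ, Φ t i j

/-- A Hawkes kernel matrix: measurable, nonnegative, integrable and causal entries. -/
def IsHawkesKernel (D : ℕ) (Φ : ℝ → Matrix (Fin D) (Fin D) ℝ) : Prop :=
  (∀ i j, Measurable fun t => Φ t i j) ∧
  (∀ t, ∀ i j, 0 ≤ Φ t i j) ∧
  (∀ i j, Integrable fun t => Φ t i j) ∧
  (∀ t < (0 : ℝ), Φ t = 0)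

/-- Hypothesis (H): the spectral radius of `‖Φ‖` is strictly smaller than 1. -/
def HypothesisH (D : ℕ) (Φ : ℝ → Matrix (Fin D) (Fin D) ℝ) : Prop :=
  spectralRadius ℂ ((kernelNorm D Φ).map Complex.ofReal) < 1

/-- `q(t) = Σ Ψ(-t)ᵀ Σ⁻¹`. -/
noncomputable def hawkesQ (D : ℕ) (Φ : ℝ → Matrix (Fin D) (Fin D) ℝ)
    (S : Matrix (Fin D) (Fin D) ℝ) : ℝ → Matrix (Fin D) (Fin D) ℝ :=
  fun t => S * (hawkesPsi D Φ (-t))ᵀ * S⁻¹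

/-- The conditional-expectation matrix
`g(t) = Ψ(t) + Σ Ψ(-t)ᵀ Σ⁻¹ + (Ψ ⋆ q)(t)`. -/
noncomputable def hawkesG (D : ℕ) (Φ : ℝ → Matrix (Fin D) (Fin D) ℝ)
    (S : Matrix (Fin D) (Fin D) ℝ) : ℝ → Matrix (Fin D) (Fin D) ℝ :=
  fun t => hawkesPsi D Φ t + hawkesQ D Φ S t +
    mconv D (hawkesPsi D Φ) (hawkesQ D Φ S) t

/-- Entrywise Laplace transform `F̂(z) = ∫ F(t) e^{zt} dt`. -/
noncomputable def mlaplace (D : ℕ) (F : ℝ → Matrix (Fin D) (Fin D) ℝ) (z : ℂ) :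
    Matrix (Fin D) (Fin D) ℂ :=
  Matrix.of fun i j => ∫ t : ℝ, (F t i j : ℂ) * Complex.exp (z * t)

theorem summable_pow_of_spectralRadius_lt_one {A : Type*} [NormedRing A] [NormedAlgebra ℂ A]
    [CompleteSpace A] (a : A) (h : spectralRadius ℂ a < 1) :
    Summable fun n : ℕ => ‖a ^ n‖ := by
  obtain ⟨r, hr1, hr2⟩ := ENNReal.lt_iff_exists_nnreal_btwn.1 h
  have hr2' : r < 1 := by exact_mod_cast hr2
  have hev := (spectrum.pow_nnnorm_pow_one_div_tendsto_nhds_spectralRadius a).eventually_lt_const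
    hr1
  have hev2 : ∀ᶠ n : ℕ in atTop, ‖‖a ^ n‖‖ ≤ (r : ℝ) ^ n := by
    filter_upwards [hev, eventually_gt_atTop 0] with n hn hn0
    have hn' : (0 : ℝ) < n := by exact_mod_cast hn0
    have h1 := ENNReal.rpow_le_rpow hn.le hn'.le
    rw [← ENNReal.rpow_mul, one_div_mul_cancel hn'.ne', ENNReal.rpow_one,
      ENNReal.rpow_natCast] at h1
    have h2 : ‖a ^ n‖₊ ≤ r ^ n := by exact_mod_cast h1
    rw [norm_norm]
    exact_mod_cast h2
  exact Summable.of_norm_bounded_eventually_nat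
    (summable_geometric_of_lt_one r.2 (by exact_mod_cast hr2')) hev2

section
attribute [local instance] Matrix.linftyOpNormedRing Matrix.linftyOpNormedAlgebra

theorem matrix_entry_summable (D : ℕ) (N : Matrix (Fin D) (Fin D) ℝ)
    (h : spectralRadius ℂ (N.map Complex.ofReal) < 1) (i j : Fin D) :
    Summable fun n : ℕ => (N ^ n) i j := by
  have h1 := summable_pow_of_spectralRadius_lt_one (N.map Complex.ofReal) h
  have h2 : Summable fun n : ℕ => (N.map Complex.ofReal) ^ n := h1.of_norm
  have h3 : ∀ n : ℕ, (N.map Complex.ofReal) ^ n = (N ^ n).map Complex.ofReal := fun n =>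
    (map_pow (Complex.ofRealHom.mapMatrix (m := Fin D)) N n).symm
  simp only [h3] at h2
  have h4 := Pi.summable.1 (Pi.summable.1 h2 i) j
  simp only [Matrix.map_apply] at h4
  exact Complex.summable_ofReal.1 h4

end

theorem matrix_geom (D : ℕ) (N : Matrix (Fin D) (Fin D) ℝ)
    (h : ∀ i j, Summable fun n : ℕ => (N ^ n) i j) (i j : Fin D) :
    HasSum (fun n : ℕ => (N ^ (n + 1)) i j) (((1 - N)⁻¹ * N) i j) := by
  have hs : Summable (fun n : ℕ => N ^ n) := Pi.summable.2 fun i => Pi.summable.2 fun j => h i j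
  have h1 := hs.one_sub_mul_tsum_pow
  rw [Matrix.inv_eq_right_inv h1]
  have h2 := hs.hasSum.mul_right N
  simp only [← pow_succ] at h2
  exact Pi.hasSum.1 (Pi.hasSum.1 h2 i) j

theorem mconvIter_nonneg (D : ℕ) (Φ : ℝ → Matrix (Fin D) (Fin D) ℝ)
    (h : ∀ t, ∀ i j, 0 ≤ Φ t i j) (k : ℕ) : ∀ t, ∀ i j, 0 ≤ mconvIter D Φ k t i j := by
  induction k with
  | zero => exact h
  | succ k ih =>
    intro t i j
    simp only [mconvIter, mconv, Matrix.of_apply]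
    exact Finset.sum_nonneg fun l _ => integral_nonneg fun s => mul_nonneg (h _ _ _) (ih _ _ _)

theorem mconvIter_causal (D : ℕ) (Φ : ℝ → Matrix (Fin D) (Fin D) ℝ)
    (h : ∀ t < (0 : ℝ), Φ t = 0) (k : ℕ) : ∀ t < (0 : ℝ), mconvIter D Φ k t = 0 := by
  induction k with
  | zero => exact h
  | succ k ih =>
    intro t ht
    ext i j
    simp only [mconvIter, mconv, Matrix.of_apply, Matrix.zero_apply]
    refine Finset.sum_eq_zero fun l _ => ?_
    rw [← integral_zero ℝ ℝ]
    congr 1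
    ext s
    rcases lt_or_ge s 0 with hs | hs
    · simp [h s hs]
    · simp [ih (t - s) (by linarith)]

theorem mconvIter_integral (D : ℕ) (Φ : ℝ → Matrix (Fin D) (Fin D) ℝ)
    (h : ∀ i j, Integrable fun t => Φ t i j) (k : ℕ) :
    ∀ i j, Integrable (fun t => mconvIter D Φ k t i j) ∧
      ∫ t, mconvIter D Φ k t i j = (kernelNorm D Φ ^ (k + 1)) i j := by
  induction k with
  | zero =>
    intro i j
    exact ⟨h i j, by simp [kernelNorm, mconvIter]⟩
  | succ k ih =>
    intro i j
    have hi : ∀ l, Integrable fun t => ∫ s : ℝ, Φ s i l * mconvIter D Φ k (t - s) l j :=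
      fun l => (h i l).integrable_convolution (ContinuousLinearMap.mul ℝ ℝ) (ih l j).1
    have hv : ∀ l, ∫ t, ∫ s : ℝ, Φ s i l * mconvIter D Φ k (t - s) l j =
        (∫ t, Φ t i l) * ∫ t, mconvIter D Φ k t l j :=
      fun l => integral_convolution (ContinuousLinearMap.mul ℝ ℝ) (h i l) (ih l j).1
    simp only [mconvIter, mconv, Matrix.of_apply]
    refine ⟨integrable_finset_sum _ fun l _ => hi l, ?_⟩
    rw [integral_finset_sum _ fun l _ => hi l, pow_succ', Matrix.mul_apply]
    refine Finset.sum_congr rfl fun l _ => ?_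
    rw [hv, (ih l j).2]
    rfl

theorem integrable_tsum_of_nonneg {F : ℕ → ℝ → ℝ} (h0 : ∀ k t, 0 ≤ F k t)
    (hi : ∀ k, Integrable (F k)) (hs : Summable fun k => ∫ t, F k t) :
    Integrable fun t => ∑' k, F k t := by
  have he : (fun t => ∑' k, F k t) = fun t => (∑' k, ENNReal.ofReal (F k t)).toReal := by
    ext t
    rw [ENNReal.tsum_toReal_eq fun k => ENNReal.ofReal_ne_top]
    exact tsum_congr fun k => (ENNReal.toReal_ofReal (h0 k t)).symm
  have hm : ∀ k, AEMeasurable fun t => ENNReal.ofReal (F k t) :=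
    fun k => (hi k).1.aemeasurable.ennreal_ofReal
  rw [he]
  refine integrable_toReal_of_lintegral_ne_top (AEMeasurable.ennreal_tsum hm) ?_
  rw [lintegral_tsum hm]
  have : ∀ k, ∫⁻ t, ENNReal.ofReal (F k t) = ENNReal.ofReal (∫ t, F k t) := fun k =>
    (ofReal_integral_eq_lintegral_ofReal (hi k) (ae_of_all _ (h0 k))).symm
  simp only [this]
  exact hs.tsum_ofReal_ne_top

/-- Under hypothesis (H), the series `Ψ = ∑_{k=1}^∞ Φ^{⋆k}` converges
absolutely in `L¹` entrywise; `Ψ` has nonnegative, causal, integrable entries and its matrix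
of `L¹` norms is entrywise bounded by `(I - ‖Φ‖)⁻¹ ‖Φ‖`. -/
theorem hawkesPsi_welldefined (D : ℕ) (hD : 0 < D)
    (Φ : ℝ → Matrix (Fin D) (Fin D) ℝ)
    (hΦ : IsHawkesKernel D Φ) (hH : HypothesisH D Φ) :
    (∀ i j, Summable fun k : ℕ => ∫ t : ℝ, mconvIter D Φ k t i j) ∧
    (∀ t, ∀ i j, 0 ≤ hawkesPsi D Φ t i j) ∧
    (∀ t < (0 : ℝ), hawkesPsi D Φ t = 0) ∧
    (∀ i j, Integrable fun t => hawkesPsi D Φ t i j) ∧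
    (∀ i j, (∫ t : ℝ, hawkesPsi D Φ t i j) ≤
      ((1 - kernelNorm D Φ)⁻¹ * kernelNorm D Φ) i j) := by
  obtain ⟨-, h0, hint, hc⟩ := hΦ
  have hI := mconvIter_integral D Φ hint
  have hN := mconvIter_nonneg D Φ h0
  have hsum := matrix_geom D (kernelNorm D Φ) (matrix_entry_summable D _ hH)
  have hS : ∀ i j, Summable fun k : ℕ => ∫ t : ℝ, mconvIter D Φ k t i j := fun i j => by
    simp only [(hI _ i j).2]
    exact (hsum i j).summable
  refine ⟨hS, fun t i j => tsum_nonneg fun k => hN k t i j, ?_, ?_, ?_⟩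
  · intro t ht
    ext i j
    simp [hawkesPsi, mconvIter_causal D Φ hc _ t ht]
  · intro i j
    exact integrable_tsum_of_nonneg (fun k t => hN k t i j) (fun k => (hI k i j).1) (hS i j)
  · intro i j
    have h1 := hasSum_integral_of_summable_integral_norm
      (F := fun k t => mconvIter D Φ k t i j) (fun k => (hI k i j).1) (by
        simp only [Real.norm_of_nonneg (hN _ _ _ _)]
        exact hS i j)
    simp only [(hI _ i j).2] at h1
    exact (h1.unique (hsum i j)).le
end

section
/- Let Φ be a Hawkes kernel matrix satisfying hypothesis (H), and suppose in addition that every entry of Φ is bounded almost everywhere by a constant φ_∞ ≥ 0. Let Ψ = Σ_{k=1}^∞ Φ^{⋆k}. Then for almost every t ∈ ℝ and all 1 ≤ i,j ≤ D, Ψ^{ij}(t) ≤ φ_∞ · (𝟙 (I − ‖Φ‖)^{−1})^{ij}, where 𝟙 denotes the D×D matrix whose entries are all equal to 1. -/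
open MeasureTheory Matrix Filter Set

theorem hk_summable_complex {D : ℕ} (A : Matrix (Fin D) (Fin D) ℂ)
    (h : spectralRadius ℂ A < 1) (i j : Fin D) : Summable fun n : ℕ => ‖(A ^ n) i j‖ := by
  letI : NormedRing (Matrix (Fin D) (Fin D) ℂ) := Matrix.linftyOpNormedRing
  letI : NormedAlgebra ℂ (Matrix (Fin D) (Fin D) ℂ) := Matrix.linftyOpNormedAlgebra
  haveI : CompleteSpace (Matrix (Fin D) (Fin D) ℂ) := FiniteDimensional.complete ℂ _
  have hent : ∀ M : Matrix (Fin D) (Fin D) ℂ, ‖M i j‖ ≤ ‖M‖ := by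
    intro M
    rw [Matrix.linfty_opNorm_def]
    have h1 : ‖M i j‖₊ ≤ ∑ k, ‖M i k‖₊ :=
      Finset.single_le_sum (f := fun k => ‖M i k‖₊) (fun _ _ => zero_le) (Finset.mem_univ j)
    have h2 := Finset.le_sup (f := fun i => ∑ k, ‖M i k‖₊) (Finset.mem_univ i)
    exact_mod_cast h1.trans h2
  obtain ⟨r, hr1, hr2⟩ := ENNReal.lt_iff_exists_nnreal_btwn.1 h
  have hT := spectrum.pow_nnnorm_pow_one_div_tendsto_nhds_spectralRadius A
  have hev := hT.eventually (gt_mem_nhds hr1)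
  have hr : (r : ℝ) < 1 := by exact_mod_cast hr2
  refine Summable.of_norm_bounded_eventually_nat (summable_geometric_of_lt_one r.2 hr) ?_
  filter_upwards [hev, eventually_gt_atTop 0] with n hn hn0
  rw [norm_norm]
  refine (hent _).trans ?_
  have hn' : (0 : ℝ) < n := by exact_mod_cast hn0
  have h3 := ENNReal.rpow_le_rpow hn.le hn'.le
  rw [← ENNReal.rpow_mul, one_div, inv_mul_cancel₀ hn'.ne', ENNReal.rpow_one,
    ENNReal.rpow_natCast] at h3
  exact_mod_cast h3

theorem hk_hasSum {D : ℕ} (N : Matrix (Fin D) (Fin D) ℝ)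
    (h : spectralRadius ℂ (N.map Complex.ofReal) < 1) :
    HasSum (fun n : ℕ => N ^ n) (1 - N)⁻¹ := by
  have hs : Summable fun n : ℕ => N ^ n := by
    refine Pi.summable.2 fun i => Pi.summable.2 fun j => ?_
    refine Summable.of_norm ?_
    refine (hk_summable_complex _ h i j).congr fun n => ?_
    have : (N.map Complex.ofReal) ^ n = (N ^ n).map Complex.ofReal := by
      have := map_pow (Complex.ofRealHom.mapMatrix : Matrix (Fin D) (Fin D) ℝ →+* _) N n
      exact this.symm
    rw [this, Matrix.map_apply, Complex.norm_real]
  have h1 : (1 - N)⁻¹ = ∑' n : ℕ, N ^ n :=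
    Matrix.inv_eq_right_inv hs.one_sub_mul_tsum_pow
  rw [h1]
  exact hs.hasSum

theorem hk_conv {f g : ℝ → ℝ} (hf : Integrable f) (hg : Integrable g) :
    Integrable (fun t => ∫ s, f s * g (t - s)) ∧
      ∫ t, ∫ s, f s * g (t - s) = (∫ t, f t) * ∫ t, g t :=
  ⟨hf.integrable_convolution (ContinuousLinearMap.mul ℝ ℝ) hg,
    integral_convolution (ContinuousLinearMap.mul ℝ ℝ) hf hg⟩

theorem hk_iter {D : ℕ} {Φ : ℝ → Matrix (Fin D) (Fin D) ℝ} (hΦ : IsHawkesKernel D Φ) (n : ℕ) :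
    (∀ t i j, 0 ≤ mconvIter D Φ n t i j) ∧
    (∀ i j, Integrable fun t => mconvIter D Φ n t i j) ∧
    (∀ i j, ∫ t, mconvIter D Φ n t i j = (kernelNorm D Φ ^ (n + 1)) i j) := by
  obtain ⟨-, h0, hI, -⟩ := hΦ
  induction n with
  | zero => exact ⟨h0, hI, fun i j => by simp [mconvIter, kernelNorm]⟩
  | succ n ih =>
    obtain ⟨ih0, ihI, ihN⟩ := ih
    refine ⟨fun t i j => ?_, fun i j => ?_, fun i j => ?_⟩
    · change 0 ≤ ∑ k : Fin D, ∫ s : ℝ, Φ s i k * mconvIter D Φ n (t - s) k j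
      exact Finset.sum_nonneg fun k _ => integral_nonneg fun s => mul_nonneg (h0 _ _ _) (ih0 _ _ _)
    · change Integrable fun t => ∑ k : Fin D, ∫ s : ℝ, Φ s i k * mconvIter D Φ n (t - s) k j
      exact integrable_finsetSum _ fun k _ => (hk_conv (hI i k) (ihI k j)).1
    · change ∫ t, ∑ k : Fin D, ∫ s : ℝ, Φ s i k * mconvIter D Φ n (t - s) k j = _
      rw [integral_finsetSum _ fun k _ => (hk_conv (hI i k) (ihI k j)).1, pow_succ',
        Matrix.mul_apply]
      refine Finset.sum_congr rfl fun k _ => ?_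
      rw [(hk_conv (hI i k) (ihI k j)).2, ihN]
      rfl

theorem hk_bound {D : ℕ} {Φ : ℝ → Matrix (Fin D) (Fin D) ℝ} (hΦ : IsHawkesKernel D Φ)
    {c : ℝ} (hbound : ∀ i j, ∀ᵐ t : ℝ, Φ t i j ≤ c) (n : ℕ) (t : ℝ) (i j : Fin D) :
    mconvIter D Φ (n + 1) t i j ≤ c * ∑ k, (kernelNorm D Φ ^ (n + 1)) k j := by
  obtain ⟨i0, iI, iN⟩ := hk_iter hΦ n
  rw [Finset.mul_sum]
  change ∑ k : Fin D, ∫ s : ℝ, Φ s i k * mconvIter D Φ n (t - s) k j ≤ _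
  refine Finset.sum_le_sum fun k _ => ?_
  rw [← iN k j, ← integral_sub_left_eq_self (fun s => mconvIter D Φ n s k j) volume t,
    ← integral_const_mul]
  refine integral_mono_of_nonneg (ae_of_all _ fun s => mul_nonneg (hΦ.2.1 _ _ _) (i0 _ _ _))
    (((iI k j).comp_sub_left t).const_mul c) ?_
  filter_upwards [hbound i k] with s hs
  exact mul_le_mul_of_nonneg_right hs (i0 _ _ _)

/-- If moreover every entry of `Φ` is a.e. bounded by `φ_∞`, then a.e.
`Ψ^{ij}(t) ≤ φ_∞ (𝟙 (I - ‖Φ‖)⁻¹)^{ij}` where `𝟙` is the all-ones matrix. -/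
theorem hawkesPsi_bounded (D : ℕ) (hD : 0 < D)
    (Φ : ℝ → Matrix (Fin D) (Fin D) ℝ)
    (hΦ : IsHawkesKernel D Φ) (hH : HypothesisH D Φ)
    (φinf : ℝ) (hφinf : 0 ≤ φinf)
    (hbound : ∀ i j, ∀ᵐ t : ℝ, Φ t i j ≤ φinf) :
    ∀ᵐ t : ℝ, ∀ i j, hawkesPsi D Φ t i j ≤
      φinf * ((((Matrix.of fun _ _ => (1 : ℝ)) : Matrix (Fin D) (Fin D) ℝ) * (1 - kernelNorm D Φ)⁻¹) i j) := by
  have hS := hk_hasSum _ hH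
  have hae : ∀ᵐ t : ℝ, ∀ i j, Φ t i j ≤ φinf := by
    rw [ae_all_iff]; intro i; rw [ae_all_iff]; exact hbound i
  filter_upwards [hae] with t ht i j
  have hle : ∀ n, mconvIter D Φ n t i j ≤ φinf * ∑ k, (kernelNorm D Φ ^ n) k j := by
    intro n
    cases n with
    | zero => simpa [mconvIter, Matrix.one_apply] using ht i j
    | succ n => exact hk_bound hΦ hbound n t i j
  have hS2 : HasSum (fun n : ℕ => φinf * ∑ k, (kernelNorm D Φ ^ n) k j)
      (φinf * ∑ k, (1 - kernelNorm D Φ)⁻¹ k j) :=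
    (hasSum_sum fun k _ => Pi.hasSum.1 (Pi.hasSum.1 hS k) j).mul_left φinf
  have hsm : Summable fun n => mconvIter D Φ n t i j :=
    Summable.of_nonneg_of_le (fun n => (hk_iter hΦ n).1 t i j) hle hS2.summable
  have := hasSum_le hle hsm.hasSum hS2
  simpa [hawkesPsi, Matrix.mul_apply] using this
end

section
/- Let Φ be a Hawkes kernel matrix satisfying hypothesis (H), Ψ = Σ_{k=1}^∞ Φ^{⋆k}, Σ a diagonal D×D matrix with strictly positive diagonal entries, and let g be the associated conditional-expectation matrix g(t) = Ψ(t) + ΣΨ(−t)ᵀΣ^{−1} + (Ψ ⋆ q)(t) with q(t) = ΣΨ(−t)ᵀΣ^{−1}. Then Φ satisfies the Wiener–Hopf system: for almost every t > 0, g(t) = Φ(t) + (Φ ⋆ g)(t). -/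
open MeasureTheory Matrix Filter Set

section Aux
open scoped Matrix.Norms.Operator in
lemma aux_summable_pow (D : ℕ) (A : Matrix (Fin D) (Fin D) ℂ) (h : spectralRadius ℂ A < 1)
    (i j : Fin D) : Summable fun n : ℕ => (A ^ n) i j := by
  have hent : ∀ B : Matrix (Fin D) (Fin D) ℂ, ‖B i j‖ ≤ ‖B‖ := by
    intro B
    rw [← coe_nnnorm, ← coe_nnnorm, NNReal.coe_le_coe, Matrix.linfty_opNNNorm_def]
    refine le_trans ?_ (Finset.le_sup (f := fun i => ∑ j, ‖B i j‖₊) (Finset.mem_univ i))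
    exact Finset.single_le_sum (f := fun j => ‖B i j‖₊) (fun _ _ => zero_le) (Finset.mem_univ j)
  obtain ⟨r, hr1, hr2⟩ := ENNReal.lt_iff_exists_nnreal_btwn.1 h
  have ht := spectrum.pow_nnnorm_pow_one_div_tendsto_nhds_spectralRadius A
  have hev := ht.eventually (gt_mem_nhds hr1)
  have hr3 : r < 1 := by exact_mod_cast hr2
  refine Summable.of_norm_bounded_eventually_nat (g := fun n => (r : ℝ) ^ n)
    (summable_geometric_of_lt_one r.coe_nonneg (by exact_mod_cast hr3)) ?_
  filter_upwards [hev, eventually_gt_atTop 0] with n hn hn0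
  refine (hent _).trans ?_
  have h1 := ENNReal.rpow_le_rpow hn.le (z := (n : ℝ)) (by positivity)
  rw [← ENNReal.rpow_mul, one_div, inv_mul_cancel₀ (Nat.cast_ne_zero.2 hn0.ne'), ENNReal.rpow_one,
    ENNReal.rpow_natCast] at h1
  have h2 : ‖A ^ n‖₊ ≤ r ^ n := by exact_mod_cast h1
  exact_mod_cast h2

lemma aux_tsum (F : ℕ → ℝ → ℝ) (hF : ∀ n, Integrable (F n)) (h0 : ∀ n t, 0 ≤ F n t)
    (hs : Summable fun n => ∫ t, F n t) :
    (∀ᵐ t, Summable fun n => F n t) ∧ Integrable fun t => ∑' n, F n t := by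
  have hfin : ∑' n, ∫⁻ t, ‖F n t‖ₑ ≠ ⊤ := by
    have : ∀ n, ∫⁻ t, ‖F n t‖ₑ = ENNReal.ofReal (∫ t, F n t) := by
      intro n
      rw [ofReal_integral_eq_lintegral_ofReal (hF n) (ae_of_all _ (h0 n))]
      exact lintegral_congr fun t => Real.enorm_of_nonneg (h0 n t)
    simp_rw [this]
    exact hs.tsum_ofReal_ne_top
  have hsum : ∀ᵐ t, Summable fun n => F n t := by
    have := summable_norm_of_tsum_eLpNorm_ne_top (p := 1) le_rfl (μ := volume)
      (fun n => (hF n).aestronglyMeasurable) (by simpa [eLpNorm_one_eq_lintegral_enorm] using hfin)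
    filter_upwards [this] with t ht using ht.of_norm
  refine ⟨hsum, ?_, ?_⟩
  · refine aestronglyMeasurable_of_tendsto_ae (u := atTop)
      (f := fun (N : ℕ) t => ∑ n ∈ Finset.range N, F n t) (fun N => ?_) ?_
    · exact (integrable_finsetSum _ fun n _ => hF n).aestronglyMeasurable
    · filter_upwards [hsum] with t ht using ht.hasSum.tendsto_sum_nat
  · refine lt_of_le_of_lt (lintegral_mono fun t => enorm_tsum_le_tsum_enorm) ?_
    rw [lintegral_tsum fun n => (hF n).aestronglyMeasurable.enorm]
    exact hfin.lt_top

/-- scalar convolution -/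
noncomputable def sconv (f g : ℝ → ℝ) (t : ℝ) : ℝ := ∫ s, f s * g (t - s)

lemma sconv_eq (f g : ℝ → ℝ) :
    sconv f g = convolution f g (ContinuousLinearMap.mul ℝ ℝ) volume := rfl

lemma sconv_integrable {f g : ℝ → ℝ} (hf : Integrable f) (hg : Integrable g) :
    Integrable (sconv f g) := by
  rw [sconv_eq]; exact hf.integrable_convolution _ hg

lemma sconv_exists {f g : ℝ → ℝ} (hf : Integrable f) (hg : Integrable g) :
    ∀ᵐ t, Integrable fun s => f s * g (t - s) :=
  hf.ae_convolution_exists (ContinuousLinearMap.mul ℝ ℝ) hg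

lemma sconv_integral {f g : ℝ → ℝ} (hf : Integrable f) (hg : Integrable g) :
    ∫ t, sconv f g t = (∫ t, f t) * ∫ t, g t := by
  rw [sconv_eq, integral_convolution _ hf hg]; rfl

lemma sconv_assoc {f g k : ℝ → ℝ} (hf : Integrable f) (hg : Integrable g) (hk : Integrable k) :
    ∀ᵐ t, sconv (sconv f g) k t = sconv f (sconv g k) t := by
  simp only [sconv_eq]
  have h1 := hf.norm.ae_convolution_exists (ContinuousLinearMap.mul ℝ ℝ)
    (hg.norm.integrable_convolution (ContinuousLinearMap.mul ℝ ℝ) hk.norm)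
  filter_upwards [h1] with t ht
  exact convolution_assoc _ _ _ _ (fun x y z => mul_assoc x y z) hf.1 hg.1 hk.1
    (hf.ae_convolution_exists _ hg) (hg.norm.ae_convolution_exists _ hk.norm) ht

lemma sconv_congr_left {f f' g : ℝ → ℝ} (h : f =ᵐ[volume] f') (t : ℝ) :
    sconv f g t = sconv f' g t := by
  refine integral_congr_ae ?_
  filter_upwards [h] with s hs
  rw [hs]

lemma ae_sub_left {p : ℝ → Prop} (h : ∀ᵐ t, p t) (t : ℝ) : ∀ᵐ s, p (t - s) :=
  (quasiMeasurePreserving_sub_left_of_right_invariant volume t).ae h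

/-- convolution with a series of nonnegative functions -/
lemma sconv_tsum {f : ℝ → ℝ} (hf : Integrable f) (hf0 : ∀ t, 0 ≤ f t)
    (F : ℕ → ℝ → ℝ) (hF : ∀ n, Integrable (F n)) (h0 : ∀ n t, 0 ≤ F n t)
    (hs : Summable fun n => ∫ t, F n t) :
    ∀ᵐ t, HasSum (fun n => sconv f (F n) t) (sconv f (fun t => ∑' n, F n t) t) := by
  obtain ⟨h1, h2⟩ := aux_tsum F hF h0 hs
  filter_upwards [sconv_exists hf h2, ae_all_iff.2 fun n => sconv_exists hf (hF n)] with t ht ht'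
  have h3 := ae_sub_left h1 t
  refine hasSum_integral_of_dominated_convergence (fun n s => f s * F n (t - s))
    (fun n => (ht' n).1) (fun n => ae_of_all _ fun s => ?_) ?_ ?_ ?_
  · rw [Real.norm_of_nonneg (mul_nonneg (hf0 _) (h0 _ _))]
  · filter_upwards [h3] with s hs using hs.mul_left _
  · simpa only [tsum_mul_left] using ht
  · filter_upwards [h3] with s hs using hs.hasSum.mul_left _

variable {D : ℕ} {Φ : ℝ → Matrix (Fin D) (Fin D) ℝ}

lemma mconv_entry (A B : ℝ → Matrix (Fin D) (Fin D) ℝ) (t : ℝ) (i j : Fin D) :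
    mconv D A B t i j = ∑ k, sconv (fun s => A s i k) (fun s => B s k j) t := rfl

lemma iter_nonneg (hΦ : IsHawkesKernel D Φ) (n : ℕ) :
    ∀ t i j, 0 ≤ mconvIter D Φ n t i j := by
  induction n with
  | zero => exact hΦ.2.1
  | succ n ih =>
    intro t i j
    rw [mconvIter, mconv_entry]
    exact Finset.sum_nonneg fun k _ => integral_nonneg fun s => mul_nonneg (hΦ.2.1 _ _ _) (ih _ _ _)

lemma iter_int (hΦ : IsHawkesKernel D Φ) (n : ℕ) :
    ∀ i j, Integrable (fun t => mconvIter D Φ n t i j) ∧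
      ∫ t, mconvIter D Φ n t i j = (kernelNorm D Φ ^ (n + 1)) i j := by
  induction n with
  | zero => intro i j; exact ⟨hΦ.2.2.1 i j, by simp [mconvIter, kernelNorm]⟩
  | succ n ih =>
    intro i j
    have h : ∀ k, Integrable (sconv (fun s => Φ s i k) (fun s => mconvIter D Φ n s k j)) :=
      fun k => sconv_integrable (hΦ.2.2.1 i k) (ih k j).1
    simp only [mconvIter, mconv_entry]
    refine ⟨integrable_finsetSum _ fun k _ => h k, ?_⟩
    rw [integral_finsetSum _ fun k _ => h k, pow_succ', Matrix.mul_apply]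
    refine Finset.sum_congr rfl fun k _ => ?_
    rw [sconv_integral (hΦ.2.2.1 i k) (ih k j).1, (ih k j).2]
    rfl

lemma iter_neg (hΦ : IsHawkesKernel D Φ) (n : ℕ) :
    ∀ t < 0, mconvIter D Φ n t = 0 := by
  induction n with
  | zero => exact hΦ.2.2.2
  | succ n ih =>
    intro t ht
    ext i j
    rw [mconvIter, mconv_entry, Matrix.zero_apply]
    refine Finset.sum_eq_zero fun k _ => ?_
    rw [sconv, ← integral_zero ℝ ℝ (μ := volume)]
    congr 1
    ext s
    rcases lt_or_ge s 0 with hs | hs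
    · simp [hΦ.2.2.2 s hs]
    · simp [ih (t - s) (by linarith)]

lemma iter_summable (hΦ : IsHawkesKernel D Φ) (hH : HypothesisH D Φ) (i j : Fin D) :
    Summable fun n => ∫ t, mconvIter D Φ n t i j := by
  have h := (summable_nat_add_iff 1).2 (aux_summable_pow D _ hH i j)
  simp only [(iter_int hΦ _ i j).2]
  rw [← Complex.summable_ofReal]
  refine h.congr fun n => ?_
  have : (kernelNorm D Φ).map Complex.ofReal = Complex.ofRealHom.mapMatrix (kernelNorm D Φ) := rfl
  rw [this, ← map_pow]
  rfl

lemma psi_int (hΦ : IsHawkesKernel D Φ) (hH : HypothesisH D Φ) (i j : Fin D) :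
    Integrable fun t => hawkesPsi D Φ t i j :=
  (aux_tsum (fun n t => mconvIter D Φ n t i j) (fun n => (iter_int hΦ n i j).1)
    (fun n t => iter_nonneg hΦ n t i j) (iter_summable hΦ hH i j)).2

lemma psi_eq (hΦ : IsHawkesKernel D Φ) (hH : HypothesisH D Φ) (i j : Fin D) :
    ∀ᵐ t, hawkesPsi D Φ t i j =
      Φ t i j + ∑ k, sconv (fun s => Φ s i k) (fun s => hawkesPsi D Φ s k j) t := by
  have h1 := (aux_tsum (fun n t => mconvIter D Φ n t i j) (fun n => (iter_int hΦ n i j).1)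
    (fun n t => iter_nonneg hΦ n t i j) (iter_summable hΦ hH i j)).1
  have h2 := fun k => sconv_tsum (hΦ.2.2.1 i k) (fun t => hΦ.2.1 t i k)
    (fun n t => mconvIter D Φ n t k j) (fun n => (iter_int hΦ n k j).1)
    (fun n t => iter_nonneg hΦ n t k j) (iter_summable hΦ hH k j)
  filter_upwards [h1, ae_all_iff.2 h2] with t ht ht2
  have h3 := (hasSum_sum fun k (_ : k ∈ Finset.univ) => ht2 k).tsum_eq
  have h4 := ht.tsum_eq_zero_add
  change ∑' n, mconvIter D Φ n t i j = _
  rw [h4]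
  exact congrArg _ h3

lemma Q_int (hΦ : IsHawkesKernel D Φ) (hH : HypothesisH D Φ) (S : Matrix (Fin D) (Fin D) ℝ)
    (i j : Fin D) : Integrable fun t => hawkesQ D Φ S t i j := by
  simp only [hawkesQ, Matrix.mul_apply, Matrix.transpose_apply]
  refine integrable_finsetSum _ fun k _ => Integrable.mul_const ?_ _
  refine integrable_finsetSum _ fun l _ => Integrable.const_mul ?_ _
  exact (psi_int hΦ hH k l).comp_neg

lemma Q_pos (hΦ : IsHawkesKernel D Φ) (S : Matrix (Fin D) (Fin D) ℝ) (t : ℝ) (ht : 0 < t) :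
    hawkesQ D Φ S t = 0 := by
  have : hawkesPsi D Φ (-t) = 0 := by
    ext i j
    simp [hawkesPsi, iter_neg hΦ _ (-t) (by linarith)]
  simp [hawkesQ, this]

lemma sconv_add_left {f f' g : ℝ → ℝ} (hf : Integrable f) (hf' : Integrable f')
    (hg : Integrable g) :
    ∀ᵐ t, sconv (fun s => f s + f' s) g t = sconv f g t + sconv f' g t := by
  filter_upwards [sconv_exists hf hg, sconv_exists hf' hg] with t h1 h2
  simp only [sconv, add_mul]
  exact integral_add h1 h2

lemma sconv_add_right {f g g' : ℝ → ℝ} (hf : Integrable f) (hg : Integrable g)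
    (hg' : Integrable g') :
    ∀ᵐ t, sconv f (fun s => g s + g' s) t = sconv f g t + sconv f g' t := by
  filter_upwards [sconv_exists hf hg, sconv_exists hf hg'] with t h1 h2
  simp only [sconv, mul_add]
  exact integral_add h1 h2

lemma sconv_sum_left {f : Fin D → ℝ → ℝ} {g : ℝ → ℝ} (hf : ∀ k, Integrable (f k))
    (hg : Integrable g) :
    ∀ᵐ t, sconv (fun s => ∑ k, f k s) g t = ∑ k, sconv (f k) g t := by
  filter_upwards [ae_all_iff.2 fun k => sconv_exists (hf k) hg] with t h1
  simp only [sconv, Finset.sum_mul]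
  exact integral_finsetSum _ fun k _ => h1 k

lemma sconv_sum_right {f : ℝ → ℝ} {g : Fin D → ℝ → ℝ} (hf : Integrable f)
    (hg : ∀ k, Integrable (g k)) :
    ∀ᵐ t, sconv f (fun s => ∑ k, g k s) t = ∑ k, sconv f (g k) t := by
  filter_upwards [ae_all_iff.2 fun k => sconv_exists hf (hg k)] with t h1
  simp only [sconv, Finset.mul_sum]
  exact integral_finsetSum _ fun k _ => h1 k

end Aux

/-- The Hawkes kernel matrix satisfies the Wiener-Hopf system
`g(t) = Φ(t) + (Φ ⋆ g)(t)` for almost every `t > 0`. -/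
theorem hawkes_wienerHopf (D : ℕ) (hD : 0 < D)
    (Φ : ℝ → Matrix (Fin D) (Fin D) ℝ)
    (hΦ : IsHawkesKernel D Φ) (hH : HypothesisH D Φ)
    (S : Matrix (Fin D) (Fin D) ℝ) (hSdiag : S.IsDiag) (hSpos : ∀ i, 0 < S i i) :
    ∀ᵐ t : ℝ, 0 < t → hawkesG D Φ S t = Φ t + mconv D Φ (hawkesG D Φ S) t := by
  have hF := hΦ.2.2.1
  have hP := psi_int hΦ hH
  have hQ := Q_int hΦ hH S
  have hPQ : ∀ k l j, Integrable (sconv (fun s => hawkesPsi D Φ s k l)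
      (fun s => hawkesQ D Φ S s l j)) := fun k l j => sconv_integrable (hP k l) (hQ l j)
  have hFP : ∀ i l k, Integrable (sconv (fun s => Φ s i l)
      (fun s => hawkesPsi D Φ s l k)) := fun i l k => sconv_integrable (hF i l) (hP l k)
  -- expansion of `Φ ⋆ g`
  have hR : ∀ i j k, ∀ᵐ t, sconv (fun s => Φ s i k) (fun s => hawkesG D Φ S s k j) t =
      sconv (fun s => Φ s i k) (fun s => hawkesPsi D Φ s k j) t +
      sconv (fun s => Φ s i k) (fun s => hawkesQ D Φ S s k j) t +
      ∑ l, sconv (fun s => Φ s i k) (sconv (fun s => hawkesPsi D Φ s k l)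
        (fun s => hawkesQ D Φ S s l j)) t := by
    intro i j k
    filter_upwards [sconv_add_right (hF i k) ((hP k j).add (hQ k j))
        (integrable_finsetSum Finset.univ fun l _ => hPQ k l j),
      sconv_add_right (hF i k) (hP k j) (hQ k j),
      sconv_sum_right (hF i k) (fun l => hPQ k l j)] with t h1 h2 h3
    rw [← h2, ← h3]
    exact h1
  -- expansion of `Ψ ⋆ q`
  have hL : ∀ i j k, ∀ᵐ t, sconv (fun s => hawkesPsi D Φ s i k)
        (fun s => hawkesQ D Φ S s k j) t =
      sconv (fun s => Φ s i k) (fun s => hawkesQ D Φ S s k j) t +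
      ∑ l, sconv (fun s => Φ s i l) (sconv (fun s => hawkesPsi D Φ s l k)
        (fun s => hawkesQ D Φ S s k j)) t := by
    intro i j k
    filter_upwards [sconv_add_left (hF i k)
        (integrable_finsetSum Finset.univ fun l _ => hFP i l k) (hQ k j),
      sconv_sum_left (fun l => hFP i l k) (hQ k j),
      ae_all_iff.2 fun l => sconv_assoc (hF i l) (hP l k) (hQ k j)] with t h1 h2 h3
    rw [sconv_congr_left (psi_eq hΦ hH i k), h1, h2]
    simp only [h3]
  filter_upwards [ae_all_iff.2 fun i => ae_all_iff.2 fun j => psi_eq hΦ hH i j,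
    ae_all_iff.2 fun i => ae_all_iff.2 fun j => ae_all_iff.2 fun k => hR i j k,
    ae_all_iff.2 fun i => ae_all_iff.2 fun j => ae_all_iff.2 fun k => hL i j k] with t h1 h2 h3 ht
  ext i j
  have hg : hawkesG D Φ S t i j = hawkesPsi D Φ t i j + hawkesQ D Φ S t i j +
    mconv D (hawkesPsi D Φ) (hawkesQ D Φ S) t i j := rfl
  rw [hg, Q_pos hΦ S t ht, Matrix.add_apply, mconv_entry, mconv_entry, h1]
  simp only [h2, h3, Finset.sum_add_distrib, Matrix.zero_apply]
  rw [Finset.sum_comm (f := fun k l => sconv (fun s => Φ s i l) (sconv (fun s => hawkesPsi D Φ s l k)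
        (fun s => hawkesQ D Φ S s k j)) t)]
  ring
end

section
/- Let Φ be a Hawkes kernel matrix satisfying hypothesis (H), Ψ = Σ_{k=1}^∞ Φ^{⋆k}, Σ a diagonal D×D matrix with strictly positive diagonal entries, and let g be the associated conditional-expectation matrix. Then g satisfies the symmetry relation g(−t) = Σ g(t)ᵀ Σ^{−1} for almost every t ∈ ℝ; entrywise, g^{ij}(−t) = (Λ^i/Λ^j) g^{ji}(t) where Λ^i = Σ^{ii}. -/
open MeasureTheory Matrix Filter Set

/-- Conjugation by a diagonal matrix, entrywise. -/
theorem diag_conj_apply (D : ℕ) (S : Matrix (Fin D) (Fin D) ℝ) (hSdiag : S.IsDiag)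
    (hSpos : ∀ i, 0 < S i i) (M : Matrix (Fin D) (Fin D) ℝ) (i j : Fin D) :
    (S * Mᵀ * S⁻¹) i j = (S i i / S j j) * M j i := by
  have hS : S = Matrix.diagonal (fun i => S i i) := hSdiag.diagonal_diag.symm
  have hinv : S⁻¹ = Matrix.diagonal (fun i => (S i i)⁻¹) := by
    apply Matrix.inv_eq_right_inv
    conv_lhs => rw [hS]
    rw [Matrix.diagonal_mul_diagonal, ← Matrix.diagonal_one]
    congr 1
    funext i
    simpa using mul_inv_cancel₀ (hSpos i).ne'
  rw [hinv, Matrix.mul_diagonal]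
  conv_lhs => rw [hS]
  rw [Matrix.diagonal_mul, Matrix.transpose_apply]
  simp only [Matrix.diagonal_apply_eq]
  ring

/-- The conditional-expectation matrix satisfies the symmetry relation
`g(-t) = Σ g(t)ᵀ Σ⁻¹`, i.e. entrywise `g^{ij}(-t) = (Λ^i / Λ^j) g^{ji}(t)`. -/
theorem hawkesG_symmetry (D : ℕ) (hD : 0 < D)
    (Φ : ℝ → Matrix (Fin D) (Fin D) ℝ)
    (hΦ : IsHawkesKernel D Φ) (hH : HypothesisH D Φ)
    (S : Matrix (Fin D) (Fin D) ℝ) (hSdiag : S.IsDiag) (hSpos : ∀ i, 0 < S i i) :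
    ∀ᵐ t : ℝ, hawkesG D Φ S (-t) = S * (hawkesG D Φ S t)ᵀ * S⁻¹ ∧
      ∀ i j, hawkesG D Φ S (-t) i j = (S i i / S j j) * hawkesG D Φ S t j i := by
  have key : ∀ t i j, hawkesG D Φ S (-t) i j = (S i i / S j j) * hawkesG D Φ S t j i := by
    intro t i j
    have hi := (hSpos i).ne'
    have hj := (hSpos j).ne'
    have hq : ∀ u a b, hawkesQ D Φ S u a b = (S a a / S b b) * hawkesPsi D Φ (-u) b a :=
      fun u a b => diag_conj_apply D S hSdiag hSpos _ a b
    have hc : mconv D (hawkesPsi D Φ) (hawkesQ D Φ S) (-t) i j =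
        (S i i / S j j) * mconv D (hawkesPsi D Φ) (hawkesQ D Φ S) t j i := by
      simp only [mconv, Matrix.of_apply, hq]
      rw [Finset.mul_sum]
      refine Finset.sum_congr rfl fun k _ => ?_
      rw [← integral_const_mul, ← integral_add_right_eq_self
        (fun s => S i i / S j j * (hawkesPsi D Φ s j k *
          (S k k / S i i * hawkesPsi D Φ (-(t - s)) i k))) t]
      refine integral_congr_ae (Eventually.of_forall fun s => ?_)
      have e1 : -(-t - s) = s + t := by ring
      have e2 : -(t - (s + t)) = s := by ring
      simp only [e1, e2]
      field_simp
    simp only [hawkesG, Matrix.add_apply]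
    rw [hc, hq, hq, neg_neg]
    field_simp
    ring
  refine Eventually.of_forall fun t => ⟨?_, key t⟩
  ext i j
  rw [key, diag_conj_apply D S hSdiag hSpos]
end

section
/- Let Φ be a Hawkes kernel matrix satisfying hypothesis (H), Ψ = Σ_{k=1}^∞ Φ^{⋆k}, Σ a diagonal D×D matrix with strictly positive diagonal entries, and let g be the associated conditional-expectation matrix. Then for every purely imaginary z (Re(z) = 0), the Laplace transform of g satisfies ĝ(z) = (I + Ψ̂(z)) Σ (I + Ψ̂(−z)ᵀ) Σ^{−1} − I. -/
open MeasureTheory Matrix Filter Set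

theorem aux_conv_integrable {f g : ℝ → ℝ} (hf : Integrable f) (hg : Integrable g) :
    Integrable (fun t => ∫ s, f s * g (t - s)) :=
  hf.integrable_convolution (ContinuousLinearMap.mul ℝ ℝ) hg

theorem aux_conv_integral {f g : ℝ → ℝ} (hf : Integrable f) (hg : Integrable g) :
    ∫ t, (∫ s, f s * g (t - s)) = (∫ t, f t) * ∫ t, g t :=
  integral_convolution (ContinuousLinearMap.mul ℝ ℝ) hf hg

theorem aux_exp_integrable {f : ℝ → ℝ} (hf : Integrable f) {z : ℂ} (hz : z.re = 0) :
    Integrable (fun t : ℝ => (f t : ℂ) * Complex.exp (z * t)) := by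
  have h1 : Integrable (fun t : ℝ => (f t : ℂ)) := hf.ofReal
  refine h1.mul_bdd (c := 1) (by fun_prop) (ae_of_all _ fun t => ?_)
  rw [Complex.norm_exp]
  simp [hz]

theorem aux_conv_laplace {f g : ℝ → ℝ} (hf : Integrable f) (hg : Integrable g)
    {z : ℂ} (hz : z.re = 0) :
    ∫ t : ℝ, ((∫ s, f s * g (t - s) : ℝ) : ℂ) * Complex.exp (z * t) =
      (∫ t : ℝ, (f t : ℂ) * Complex.exp (z * t)) * ∫ t : ℝ, (g t : ℂ) * Complex.exp (z * t) := by
  rw [← ContinuousLinearMap.mul_apply' ℂ ℂ, ← integral_convolution (ContinuousLinearMap.mul ℂ ℂ)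
    (aux_exp_integrable hf hz) (aux_exp_integrable hg hz)]
  refine integral_congr_ae (ae_of_all _ fun t => ?_)
  simp only [convolution_def, ContinuousLinearMap.mul_apply']
  rw [← integral_complex_ofReal, ← integral_mul_const]
  refine integral_congr_ae (ae_of_all _ fun s => ?_)
  have : Complex.exp (z * t) = Complex.exp (z * s) * Complex.exp (z * ((t - s : ℝ) : ℂ)) := by
    rw [← Complex.exp_add]; congr 1; push_cast; ring
  simp only [this]
  push_cast
  ring

theorem aux_tsum_integrable {F : ℕ → ℝ → ℝ} (hF : ∀ n, Integrable (F n))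
    (h0 : ∀ n t, 0 ≤ F n t) (hs : Summable fun n => ∫ t, F n t) :
    Integrable (fun t => ∑' n, F n t) := by
  have e : (fun t => ∑' n, F n t) = fun t => (∑' n, ENNReal.ofReal (F n t)).toReal := by
    funext t
    rw [ENNReal.tsum_toReal_eq (fun n => ENNReal.ofReal_ne_top)]
    simp [ENNReal.toReal_ofReal (h0 _ t)]
  rw [e]
  have hm : ∀ n, AEMeasurable (fun t => ENNReal.ofReal (F n t)) :=
    fun n => (hF n).aemeasurable.ennreal_ofReal
  refine integrable_toReal_of_lintegral_ne_top (AEMeasurable.tsum hm) ?_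
  rw [lintegral_tsum hm]
  have : ∀ n, ∫⁻ t, ENNReal.ofReal (F n t) = ENNReal.ofReal (∫ t, F n t) := fun n =>
    (ofReal_integral_eq_lintegral_ofReal (hF n) (ae_of_all _ (h0 n))).symm
  simp_rw [this]
  rw [← ENNReal.ofReal_tsum_of_nonneg (fun n => integral_nonneg (h0 n)) hs]
  exact ENNReal.ofReal_ne_top

section
attribute [local instance] Matrix.linftyOpNormedRing Matrix.linftyOpNormedAlgebra

theorem aux_pow_summable {D : ℕ} (A : Matrix (Fin D) (Fin D) ℂ) (h : spectralRadius ℂ A < 1)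
    (i j : Fin D) : Summable fun n => (A ^ n) i j := by
  have : CompleteSpace (Matrix (Fin D) (Fin D) ℂ) := FiniteDimensional.complete ℂ _
  have hle : ∀ B : Matrix (Fin D) (Fin D) ℂ, ‖B i j‖ ≤ ‖B‖ := by
    intro B
    have h1 : ‖B i j‖₊ ≤ ∑ j, ‖B i j‖₊ :=
      Finset.single_le_sum (f := fun j => ‖B i j‖₊) (fun _ _ => zero_le) (Finset.mem_univ j)
    have h2 : ∑ j, ‖B i j‖₊ ≤ ‖B‖₊ := by
      rw [Matrix.linfty_opNNNorm_def]
      exact Finset.le_sup (f := fun i => ∑ j, ‖B i j‖₊) (Finset.mem_univ i)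
    exact_mod_cast h1.trans h2
  obtain ⟨r, hr1, hr2⟩ := ENNReal.lt_iff_exists_nnreal_btwn.1 h
  have ht := spectrum.pow_nnnorm_pow_one_div_tendsto_nhds_spectralRadius A
  have hev := ht.eventually_lt_const hr1
  have hr2' : r < 1 := by exact_mod_cast hr2
  refine Summable.of_norm_bounded_eventually_nat (g := fun n => (r : ℝ) ^ n)
    (summable_geometric_of_lt_one r.2 (by exact_mod_cast hr2')) ?_
  filter_upwards [hev, eventually_gt_atTop 0] with n hn hn0
  refine (hle _).trans ?_
  have hn' : (0:ℝ) < n := by exact_mod_cast hn0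
  have h3 : (‖A ^ n‖₊ : ENNReal) ≤ (r : ENNReal) ^ n := by
    have := ENNReal.rpow_le_rpow hn.le hn'.le
    rwa [← ENNReal.rpow_mul, one_div_mul_cancel hn'.ne', ENNReal.rpow_one,
      ENNReal.rpow_natCast] at this
  have h4 : ‖A ^ n‖₊ ≤ r ^ n := by exact_mod_cast h3
  exact_mod_cast h4
end

theorem aux_iter {D : ℕ} {Φ : ℝ → Matrix (Fin D) (Fin D) ℝ} (hΦ : IsHawkesKernel D Φ) (n : ℕ) :
    ∀ i j, (∀ t, 0 ≤ mconvIter D Φ n t i j) ∧ Integrable (fun t => mconvIter D Φ n t i j) ∧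
      ∫ t, mconvIter D Φ n t i j = (kernelNorm D Φ ^ (n + 1)) i j := by
  obtain ⟨-, hp, hi, -⟩ := hΦ
  induction n with
  | zero =>
    intro i j
    exact ⟨fun t => hp t i j, hi i j, by simp [mconvIter, kernelNorm]⟩
  | succ n ih =>
    intro i j
    simp only [mconvIter, mconv, Matrix.of_apply]
    have hint : ∀ k, Integrable fun t => ∫ s, Φ s i k * mconvIter D Φ n (t - s) k j :=
      fun k => aux_conv_integrable (hi i k) (ih k j).2.1
    refine ⟨fun t => Finset.sum_nonneg fun k _ => integral_nonneg fun s =>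
      mul_nonneg (hp s i k) ((ih k j).1 _), integrable_finsetSum _ fun k _ => hint k, ?_⟩
    rw [integral_finsetSum _ fun k _ => hint k, pow_succ', Matrix.mul_apply]
    refine Finset.sum_congr rfl fun k _ => ?_
    rw [aux_conv_integral (hi i k) (ih k j).2.1, (ih k j).2.2]
    rfl

theorem aux_psi {D : ℕ} {Φ : ℝ → Matrix (Fin D) (Fin D) ℝ} (hΦ : IsHawkesKernel D Φ)
    (hH : HypothesisH D Φ) (i j : Fin D) : Integrable (fun t => hawkesPsi D Φ t i j) := by
  simp only [hawkesPsi, Matrix.of_apply]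
  refine aux_tsum_integrable (fun n => (aux_iter hΦ n i j).2.1)
    (fun n => (aux_iter hΦ n i j).1) ?_
  simp_rw [(aux_iter hΦ _ i j).2.2]
  rw [summable_nat_add_iff (f := fun n => (kernelNorm D Φ ^ n) i j) 1]
  have h := aux_pow_summable _ hH i j
  have e : ∀ n, (((kernelNorm D Φ).map Complex.ofReal) ^ n) i j
      = (((kernelNorm D Φ ^ n) i j : ℝ) : ℂ) := by
    intro n
    have := (Matrix.map_pow (kernelNorm D Φ) Complex.ofRealHom n)
    have h2 := congrFun (congrFun this i) j
    exact h2.symm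
  simp_rw [e] at h
  exact Complex.summable_ofReal.1 h

/-- On the imaginary axis, the Laplace transform of `g` satisfies
`ĝ(z) = (I + Ψ̂(z)) Σ (I + Ψ̂(-z)ᵀ) Σ⁻¹ - I`. -/
theorem hawkesG_laplace (D : ℕ) (hD : 0 < D)
    (Φ : ℝ → Matrix (Fin D) (Fin D) ℝ)
    (hΦ : IsHawkesKernel D Φ) (hH : HypothesisH D Φ)
    (S : Matrix (Fin D) (Fin D) ℝ) (hSdiag : S.IsDiag) (hSpos : ∀ i, 0 < S i i) :
    ∀ z : ℂ, z.re = 0 →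
      mlaplace D (hawkesG D Φ S) z =
        (1 + mlaplace D (hawkesPsi D Φ) z) * S.map Complex.ofReal *
          (1 + (mlaplace D (hawkesPsi D Φ) (-z))ᵀ) * (S.map Complex.ofReal)⁻¹ - 1 := by
  intro z hz
  have hz' : (-z).re = 0 := by simp [hz]
  have hψ := aux_psi hΦ hH
  obtain ⟨d, rfl⟩ : ∃ d : Fin D → ℝ, S = Matrix.diagonal d := ⟨S.diag, hSdiag.diagonal_diag.symm⟩
  have hd : ∀ i, 0 < d i := fun i => by simpa using hSpos i
  have hinv : (Matrix.diagonal d)⁻¹ = Matrix.diagonal fun i => (d i)⁻¹ := by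
    refine Matrix.inv_eq_right_inv ?_
    rw [Matrix.diagonal_mul_diagonal, ← Matrix.diagonal_one]
    congr 1; funext i; exact mul_inv_cancel₀ (hd i).ne'
  have hmap : (Matrix.diagonal d).map Complex.ofReal = Matrix.diagonal fun i => (d i : ℂ) := by
    rw [Matrix.diagonal_map (by simp)]
  have hinvC : (Matrix.diagonal fun i => (d i : ℂ))⁻¹ = Matrix.diagonal fun i => (d i : ℂ)⁻¹ := by
    refine Matrix.inv_eq_right_inv ?_
    rw [Matrix.diagonal_mul_diagonal, ← Matrix.diagonal_one]
    congr 1; funext i; exact mul_inv_cancel₀ (by exact_mod_cast (hd i).ne')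
  have hq : ∀ t i j, hawkesQ D Φ (Matrix.diagonal d) t i j =
      d i * hawkesPsi D Φ (-t) j i * (d j)⁻¹ := by
    intro t i j
    simp [hawkesQ, hinv, Matrix.mul_diagonal, Matrix.diagonal_mul]
  have hqi : ∀ i j, Integrable fun t => hawkesQ D Φ (Matrix.diagonal d) t i j := by
    intro i j
    simp_rw [hq]
    exact ((hψ j i).comp_neg.const_mul _).mul_const _
  have hqL : ∀ i j, mlaplace D (hawkesQ D Φ (Matrix.diagonal d)) z i j =
      d i * mlaplace D (hawkesPsi D Φ) (-z) j i * (d j : ℂ)⁻¹ := by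
    intro i j
    simp only [mlaplace, Matrix.of_apply, hq]
    rw [← integral_neg_eq_self, ← integral_const_mul, ← integral_mul_const]
    refine integral_congr_ae (ae_of_all _ fun t => ?_)
    simp only [neg_neg]
    push_cast
    rw [mul_neg, neg_mul]
    ring
  have hc : ∀ i j k, Integrable fun t => ∫ s, hawkesPsi D Φ s i k *
      hawkesQ D Φ (Matrix.diagonal d) (t - s) k j :=
    fun i j k => aux_conv_integrable (hψ i k) (hqi k j)
  have hG : mlaplace D (hawkesG D Φ (Matrix.diagonal d)) z =
      mlaplace D (hawkesPsi D Φ) z + mlaplace D (hawkesQ D Φ (Matrix.diagonal d)) z +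
      mlaplace D (hawkesPsi D Φ) z * mlaplace D (hawkesQ D Φ (Matrix.diagonal d)) z := by
    ext i j
    simp only [Matrix.add_apply, Matrix.mul_apply]
    simp only [mlaplace, Matrix.of_apply]
    simp_rw [← aux_conv_laplace (hψ i _) (hqi _ j) hz]
    rw [← integral_finsetSum _ fun k _ => aux_exp_integrable (hc i j k) hz,
      ← integral_add (aux_exp_integrable (hψ i j) hz) (aux_exp_integrable (hqi i j) hz)]
    refine Eq.trans ?_ (integral_add
      ((aux_exp_integrable (hψ i j) hz).add (aux_exp_integrable (hqi i j) hz))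
        (integrable_finsetSum _ fun k _ => aux_exp_integrable (hc i j k) hz))
    refine integral_congr_ae (ae_of_all _ fun t => ?_)
    simp only [hawkesG, mconv, Matrix.add_apply, Matrix.of_apply, Pi.add_apply]
    push_cast
    rw [← Finset.sum_mul]
    ring
  have hQ : mlaplace D (hawkesQ D Φ (Matrix.diagonal d)) z =
      (Matrix.diagonal fun i => (d i : ℂ)) * (mlaplace D (hawkesPsi D Φ) (-z))ᵀ *
        (Matrix.diagonal fun i => (d i : ℂ))⁻¹ := by
    ext i j
    rw [hqL, hinvC, Matrix.mul_diagonal, Matrix.diagonal_mul, Matrix.transpose_apply]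
  have hone : (Matrix.diagonal fun i => (d i : ℂ)) * (Matrix.diagonal fun i => (d i : ℂ))⁻¹ = 1 := by
    rw [hinvC, Matrix.diagonal_mul_diagonal, ← Matrix.diagonal_one]
    congr 1; funext i; exact mul_inv_cancel₀ (by exact_mod_cast (hd i).ne')
  rw [hG, hQ, hmap]
  generalize (Matrix.diagonal fun i => (d i : ℂ))⁻¹ = T at *
  generalize (Matrix.diagonal fun i => (d i : ℂ)) = R at *
  rw [mul_add (_ * R), add_mul _ _ T, mul_one, mul_assoc _ R T, hone]
  noncomm_ring
end

section
/- Let l ≥ 0 be an integer and β ∈ (l, l+1]. Let g : ℝ → ℝ be of class C^l with its l-th derivative (β−l)-Hölder continuous with constant L (so for l = 0, g is β-Hölder with constant L). Let K : ℝ → ℝ be integrable with ∫_ℝ K(u) du = 1, ∫_ℝ u^n K(u) du = 0 for every integer 1 ≤ n ≤ l, and ∫_ℝ |u|^β |K(u)| du < ∞. Then for every t ∈ ℝ and every h > 0, the smoothing bias satisfies |∫_ℝ (g(t + uh) − g(t)) K(u) du| ≤ (L/l!) h^β ∫_ℝ |u|^β |K(u)| du. In particular the bias is O(h^β) as h → 0.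 -/
open MeasureTheory

lemma ksb_taylor_within (g : ℝ → ℝ) (l : ℕ) (hg : ContDiff ℝ (l : ℕ∞) g) (t x : ℝ)
    (hx : t ≠ x) (m : ℕ) (hm : m ≤ l) :
    taylorWithinEval g m (Set.uIcc t x) t x =
      ∑ k ∈ Finset.range (m + 1), iteratedDeriv k g t / k.factorial * (x - t) ^ k := by
  rw [taylor_within_apply]
  refine Finset.sum_congr rfl fun k hk => ?_
  have hk' : k ≤ l := by
    have := Finset.mem_range.1 hk
    omega
  rw [iteratedDerivWithin_eq_iteratedDeriv (uniqueDiffOn_uIcc hx)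
    ((hg.of_le (by exact_mod_cast hk')).contDiffAt) Set.left_mem_uIcc]
  simp only [smul_eq_mul]
  ring

lemma ksb_remainder (l : ℕ) (β L : ℝ)
    (hβl : (l : ℝ) < β) (hL : 0 ≤ L) (g : ℝ → ℝ)
    (hg : ContDiff ℝ (l : ℕ∞) g)
    (hHolder : ∀ x y : ℝ,
      |iteratedDeriv l g x - iteratedDeriv l g y| ≤ L * |x - y| ^ (β - (l : ℝ)))
    (t x : ℝ) :
    |g x - ∑ k ∈ Finset.range (l + 1), iteratedDeriv k g t / k.factorial * (x - t) ^ k|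
      ≤ L / l.factorial * |x - t| ^ β := by
  rcases eq_or_ne t x with rfl | hx
  · rw [Finset.sum_range_succ']
    simp only [sub_self, ne_eq, Nat.add_eq_zero_iff, one_ne_zero, and_false, not_false_eq_true,
      zero_pow, mul_zero, Finset.sum_const_zero]
    simp
    positivity
  cases l with
  | zero => simpa using hHolder x t
  | succ m =>
    have hu := uniqueDiffOn_uIcc hx
    have hmm : ContDiff ℝ m g := hg.of_le (by exact_mod_cast Nat.le_succ m)
    obtain ⟨y, hy, hyeq⟩ := taylor_mean_remainder_lagrange (f := g) (n := m) hx hmm.contDiffOn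
      ((hg.contDiffOn.differentiableOn_iteratedDerivWithin
        (by exact_mod_cast Nat.lt_succ_self m) hu).mono Set.uIoo_subset_uIcc_self)
    rw [ksb_taylor_within g _ hg t x hx m (Nat.le_succ m),
      iteratedDerivWithin_eq_iteratedDeriv hu hg.contDiffAt
        (Set.uIoo_subset_uIcc_self hy)] at hyeq
    rw [Finset.sum_range_succ, ← sub_sub, hyeq]
    have hyt : |y - t| ≤ |x - t| := Set.abs_sub_left_of_mem_uIcc (Set.uIoo_subset_uIcc_self hy)
    have hpos : 0 < |x - t| := abs_pos.2 (sub_ne_zero.2 hx.symm)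
    have h1 : |iteratedDeriv (m+1) g y - iteratedDeriv (m+1) g t|
        ≤ L * |x - t| ^ (β - ((m + 1 : ℕ) : ℝ)) := by
      refine (hHolder y t).trans ?_
      gcongr
    have h2 : |x - t| ^ β = |x - t| ^ (β - ((m + 1 : ℕ) : ℝ)) * |x - t| ^ (m + 1) := by
      rw [← Real.rpow_natCast, ← Real.rpow_add hpos]
      simp
    have h3 : iteratedDeriv (m + 1) g y * (x - t) ^ (m + 1) / ((m + 1).factorial : ℝ) -
        iteratedDeriv (m + 1) g t / ((m + 1).factorial : ℝ) * (x - t) ^ (m + 1) =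
        (iteratedDeriv (m+1) g y - iteratedDeriv (m+1) g t) / ((m + 1).factorial : ℝ)
          * (x - t) ^ (m + 1) := by ring
    rw [h3, h2, abs_mul, abs_div, abs_pow, Nat.abs_cast]
    calc _ ≤ (L * |x - t| ^ (β - ((m + 1 : ℕ) : ℝ))) / ((m + 1).factorial : ℝ)
          * |x - t| ^ (m + 1) := by gcongr
      _ = _ := by ring

/-- Bias of kernel smoothing: if `g` is `C^l` with `(β - l)`-Hölder `l`-th
derivative (constant `L`), `β ∈ (l, l+1]`, and `K` is a kernel of order `l` with finite
`β`-moment, then for every `t` and `h > 0`,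
`|∫ (g(t + uh) - g(t)) K(u) du| ≤ (L / l!) h^β ∫ |u|^β |K(u)| du`. -/
theorem kernel_smoothing_bias (l : ℕ) (β L : ℝ)
    (hβl : (l : ℝ) < β) (hβu : β ≤ (l : ℝ) + 1) (hL : 0 ≤ L)
    (g K : ℝ → ℝ)
    (hg : ContDiff ℝ (l : ℕ∞) g)
    (hHolder : ∀ x y : ℝ,
      |iteratedDeriv l g x - iteratedDeriv l g y| ≤ L * |x - y| ^ (β - (l : ℝ)))
    (hK : Integrable K)
    (hK1 : (∫ u : ℝ, K u) = 1)
    (hKmom : ∀ n : ℕ, 1 ≤ n → n ≤ l → (∫ u : ℝ, u ^ n * K u) = 0)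
    (hKβ : Integrable fun u : ℝ => |u| ^ β * |K u|) :
    ∀ t : ℝ, ∀ h : ℝ, 0 < h →
      |∫ u : ℝ, (g (t + u * h) - g t) * K u| ≤
        (L / Nat.factorial l) * h ^ β * ∫ u : ℝ, |u| ^ β * |K u| := by
  intro t h hh
  have hint : ∀ n : ℕ, n ≤ l → Integrable fun u : ℝ => u ^ n * K u := by
    intro n hn
    refine (hK.norm.add hKβ).mono'
      ((continuous_pow n).aestronglyMeasurable.mul hK.aestronglyMeasurable) ?_
    refine Filter.Eventually.of_forall fun u => ?_
    simp only [Pi.add_apply, norm_mul, norm_pow, Real.norm_eq_abs]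
    have hnβ : (n : ℝ) ≤ β := le_trans (by exact_mod_cast hn) hβl.le
    have : |u| ^ n ≤ 1 + |u| ^ β := by
      rcases le_total |u| 1 with h1 | h1
      · have := pow_le_one₀ (n := n) (abs_nonneg u) h1
        have := Real.rpow_nonneg (abs_nonneg u) β
        linarith
      · have := Real.rpow_le_rpow_of_exponent_le h1 hnβ
        rw [Real.rpow_natCast] at this
        linarith
    calc _ ≤ (1 + |u| ^ β) * |K u| := by gcongr
      _ = _ := by ring
  set c : ℕ → ℝ := fun k => iteratedDeriv k g t / k.factorial * h ^ k with hc
  set R : ℝ → ℝ := fun u => g (t + u * h) - ∑ k ∈ Finset.range (l + 1), c k * u ^ k with hR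
  have hRb : ∀ u, ‖R u * K u‖ ≤ (L / l.factorial) * h ^ β * (|u| ^ β * |K u|) := by
    intro u
    have := ksb_remainder l β L hβl hL g hg hHolder t (t + u * h)
    have e : ∑ k ∈ Finset.range (l + 1), iteratedDeriv k g t / k.factorial
        * (t + u * h - t) ^ k = ∑ k ∈ Finset.range (l + 1), c k * u ^ k := by
      refine Finset.sum_congr rfl fun k _ => ?_
      simp only [hc, add_sub_cancel_left, mul_pow]
      ring
    rw [e, add_sub_cancel_left, abs_mul, abs_of_pos hh,
      Real.mul_rpow (abs_nonneg u) hh.le] at this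
    rw [norm_mul, Real.norm_eq_abs, Real.norm_eq_abs]
    calc _ ≤ (L / l.factorial * (|u| ^ β * h ^ β)) * |K u| := by gcongr
      _ = _ := by ring
  have hgc : Continuous g := hg.continuous
  have hRc : Continuous R := by fun_prop
  have hRint : Integrable fun u => R u * K u :=
    (hKβ.const_mul _).mono' (hRc.aestronglyMeasurable.mul hK.aestronglyMeasurable)
      (Filter.Eventually.of_forall hRb)
  have hsplit : (fun u => (g (t + u * h) - g t) * K u) =
      fun u => R u * K u + ∑ k ∈ Finset.range l, c (k + 1) * (u ^ (k + 1) * K u) := by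
    funext u
    have e : ∑ k ∈ Finset.range (l + 1), c k * u ^ k
        = ∑ k ∈ Finset.range l, c (k + 1) * u ^ (k + 1) + g t := by
      rw [Finset.sum_range_succ']
      simp [hc]
    simp only [hR, e, ← mul_assoc, ← Finset.sum_mul]
    ring
  have hSint : ∀ k ∈ Finset.range l, Integrable fun u : ℝ => c (k + 1) * (u ^ (k + 1) * K u) :=
    fun k hk => (hint (k + 1) (Finset.mem_range.1 hk)).const_mul _
  have hmain : (∫ u : ℝ, (g (t + u * h) - g t) * K u) = ∫ u, R u * K u := by
    rw [hsplit, integral_add hRint (integrable_finsetSum _ hSint), integral_finsetSum _ hSint,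
      Finset.sum_eq_zero, add_zero]
    intro k hk
    rw [integral_const_mul, hKmom (k + 1) (by omega) (Finset.mem_range.1 hk), mul_zero]
  rw [hmain, ← integral_const_mul, ← Real.norm_eq_abs]
  exact norm_integral_le_of_norm_le (hKβ.const_mul _) (Filter.Eventually.of_forall hRb)
end
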